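/- Let X be a real Banach space and let M : Σ → b(X) be a set-valued map defined on a σ-algebra Σ. Suppose there is a linear subspace Y ⊆ X* having the Orlicz-Thomas property such that: (i) M(A) is convex and σ(X,Y)-compact for every A ∈ Σ; and (ii) the support map s(x*,M) is countably additive for every x* ∈ Y. Then M is a strong multimeasure. -/

import Mathlib

/-!
For a disjoint sequence `A` the stronger identity `M (⋃ n, A n) = ∑ₙ M (A n)` holds, and both
inclusions come from one consequence of the Hahn–Banach theorem
(`exists_mem_forall_apply_eq`): a linear functional `φ` on `Y` that is dominated by the support
function of a convex `σ(X, Y)`-compact set `K` is the evaluation at a point of `K`.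

* Given a selection `x n ∈ M (A n)`, the series `∑ₙ y (x n)` converges absolutely for `y ∈ Y`,
  since `|y (x n)|` is bounded by the summable sequence
  `|s(y, M (A n))| + |s(-y, M (A n))|`. For `S ⊆ ℕ` the functional `y ↦ ∑_{n ∈ S} y (x n)` is
  dominated by `s(y, M (⋃_{n ∈ S} A n))`, so it is represented by some `ν S ∈ M (⋃_{n ∈ S} A n)`.
  Then `y ∘ ν` is countably additive on the power set of `ℕ` for all `y ∈ Y`, and so is `ν` by the
  Orlicz–Thomas property. Since `Y` separates points, `ν {n} = x n`; hence `∑ₙ x n` converges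
  unconditionally to `ν ℕ ∈ M (⋃ n, A n)`.
* The set `∑ₙ M (A n)` is convex, and `σ(X, Y)`-compact as the image of the compact product
  `∏ₙ M (A n)` under the sum map, which is continuous by the Weierstrass M-test. Its support
  function at `y ∈ Y` is `∑ₙ s(y, M (A n)) = s(y, M (⋃ n, A n))`, so the same consequence of
  Hahn–Banach puts every point of `M (⋃ n, A n)` into it.
-/

/-- The series of sets `∑ₙ Cₙ` is unconditionally convergent: every selection is
(unconditionally) summable. -/
def UncondConvSeriesOfSets {X : Type*} [NormedAddCommGroup X] (C : ℕ → Set X) : Prop :=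
  ∀ x : ℕ → X, (∀ n, x n ∈ C n) → Summable x

/-- The sum of the series of sets `∑ₙ Cₙ`: the set of all sums of selections. -/
def seriesSumSet {X : Type*} [NormedAddCommGroup X] (C : ℕ → Set X) : Set X :=
  {s | ∃ x : ℕ → X, (∀ n, x n ∈ C n) ∧ HasSum x s}

/-- The topology `σ(X, Y)` of pointwise convergence on a set `Y ⊆ X*`. -/
def sigmaTop {X : Type*} [NormedAddCommGroup X] [NormedSpace ℝ X]
    (Y : Set (X →L[ℝ] ℝ)) : TopologicalSpace X :=
  TopologicalSpace.induced (fun x => fun y : Y => (y : X →L[ℝ] ℝ) x) Pi.topologicalSpace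

/-- The support functional `s(x*, C) = sup x*(C)`. -/
noncomputable def supportFn {X : Type*} [NormedAddCommGroup X] [NormedSpace ℝ X]
    (f : X →L[ℝ] ℝ) (C : Set X) : ℝ := sSup (f '' C)

/-- A set function on a σ-algebra, with values in a topological abelian monoid, is
countably additive: on every disjoint sequence of measurable sets the series of values
converges (unconditionally) to the value of the union. -/
def CountablyAdditive {Ω E : Type*} [MeasurableSpace Ω] [AddCommMonoid E]
    [TopologicalSpace E] (ν : Set Ω → E) : Prop :=
  ∀ A : ℕ → Set Ω, (∀ n, MeasurableSet (A n)) → Pairwise (Function.onFun Disjoint A) →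
    HasSum (fun n => ν (A n)) (ν (⋃ n, A n))

/-- A set `W ⊆ X*` has the Orlicz–Thomas property: for every σ-algebra `Σ` and every map
`ν : Σ → X`, if `x* ∘ ν` is countably additive for all `x* ∈ W` then `ν` is countably
additive. -/
def HasOrliczThomas {X : Type*} [NormedAddCommGroup X] [NormedSpace ℝ X]
    (W : Set (X →L[ℝ] ℝ)) : Prop :=
  ∀ (Ω : Type) (_ : MeasurableSpace Ω) (ν : Set Ω → X),
    (∀ f ∈ W, CountablyAdditive (fun A => f (ν A))) → CountablyAdditive ν

/-- `M` is a strong multimeasure: for every disjoint sequence of measurable sets the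
series `∑ₙ M(Aₙ)` is unconditionally convergent and the norm closure of `M(⋃ₙ Aₙ)`
equals the norm closure of `∑ₙ M(Aₙ)`. -/
def IsStrongMultimeasure {Ω X : Type*} [MeasurableSpace Ω] [NormedAddCommGroup X]
    (M : Set Ω → Set X) : Prop :=
  ∀ A : ℕ → Set Ω, (∀ n, MeasurableSet (A n)) → Pairwise (Function.onFun Disjoint A) →
    UncondConvSeriesOfSets (fun n => M (A n)) ∧
    closure (M (⋃ n, A n)) = closure (seriesSumSet fun n => M (A n))

open Set Filter Topology

section

variable {X : Type*} [NormedAddCommGroup X] [NormedSpace ℝ X]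

/-- The canonical map `X → ℝ^Y`; it induces the topology `σ(X, Y)` on `X`, so a subset of `X` is
`σ(X, Y)`-compact exactly when its image is compact. -/
def evalOn (Y : Submodule ℝ (X →L[ℝ] ℝ)) (x : X) : Y → ℝ := fun y => (y : X →L[ℝ] ℝ) x

lemma isCompact_image_evalOn {Y : Submodule ℝ (X →L[ℝ] ℝ)} {K : Set X}
    (hK : @IsCompact X (sigmaTop (Y : Set (X →L[ℝ] ℝ))) K) : IsCompact (evalOn Y '' K) := by
  let _ : TopologicalSpace X := sigmaTop (Y : Set (X →L[ℝ] ℝ))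
  exact hK.image continuous_induced_dom

/-- Hahn–Banach separation of a point from a compact convex set in the algebraic dual of `F`,
with the topology of pointwise convergence on `F`: the continuous functionals of that topology
are the evaluations at points of `F`. -/
lemma mem_of_forall_exists_le {F : Type*} [AddCommGroup F] [Module ℝ F] {K : Set (F →ₗ[ℝ] ℝ)}
    (hconv : Convex ℝ K) (hc : IsCompact ((fun (g : F →ₗ[ℝ] ℝ) (y : F) => g y) '' K))
    {φ : F →ₗ[ℝ] ℝ} (h : ∀ y : F, ∃ k ∈ K, φ y ≤ k y) : φ ∈ K := by
  let B : (F →ₗ[ℝ] ℝ) →ₗ[ℝ] F →ₗ[ℝ] ℝ := LinearMap.id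
  have hemb : IsEmbedding (fun (x : WeakBilin B) (y : F) => B x y) :=
    WeakBilin.isEmbedding (B := B) Function.injective_id
  let K' : Set (WeakBilin B) := K
  have hcK : IsCompact K' := hemb.isInducing.isCompact_iff.2 hc
  have hconv' : Convex ℝ K' := fun a ha b hb s t hs ht hst => hconv ha hb hs ht hst
  have : T2Space (WeakBilin B) := hemb.t2Space
  by_contra hφ
  obtain ⟨f, u, hlt, hu⟩ := geometric_hahn_banach_closed_point (s := K')
    (x := (φ : WeakBilin B)) hconv' hcK.isClosed hφ
  obtain ⟨y, rfl⟩ := LinearMap.dualEmbedding_surjective B f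
  obtain ⟨k, hk, hle⟩ := h y
  have h1 : k y < u := hlt _ hk
  have h2 : u < φ y := hu
  linarith

/-- A linear functional on `Y` dominated by the support function of a convex `σ(X, Y)`-compact
set `K` is the evaluation at a point of `K`. -/
lemma exists_mem_forall_apply_eq {Y : Submodule ℝ (X →L[ℝ] ℝ)} {K : Set X} (hconv : Convex ℝ K)
    (hc : IsCompact (evalOn Y '' K)) (φ : Y →ₗ[ℝ] ℝ)
    (h : ∀ y : Y, ∃ k ∈ K, φ y ≤ (y : X →L[ℝ] ℝ) k) :
    ∃ k ∈ K, ∀ y : Y, φ y = (y : X →L[ℝ] ℝ) k := by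
  let J : X →ₗ[ℝ] (Y →ₗ[ℝ] ℝ) :=
    { toFun := fun x =>
        { toFun := fun y => (y : X →L[ℝ] ℝ) x
          map_add' := fun _ _ => rfl
          map_smul' := fun _ _ => rfl }
      map_add' := fun a b => by ext y; simp
      map_smul' := fun c a => by ext y; simp }
  have hφ : φ ∈ J '' K := by
    refine mem_of_forall_exists_le (F := Y) (K := J '' K) (hconv.linear_image J) ?_ fun y => ?_
    · rw [image_image]
      exact hc
    · obtain ⟨k, hk, hle⟩ := h y
      exact ⟨J k, mem_image_of_mem _ hk, hle⟩
  obtain ⟨k, hk, rfl⟩ := hφ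
  exact ⟨k, hk, fun _ => rfl⟩

lemma le_supportFn {K : Set X} (hb : Bornology.IsBounded K) (f : X →L[ℝ] ℝ) {x : X}
    (hx : x ∈ K) : f x ≤ supportFn f K :=
  le_csSup (f.lipschitz.isBounded_image hb).bddAbove ⟨x, hx, rfl⟩

lemma abs_apply_le {K : Set X} (hb : Bornology.IsBounded K) (f : X →L[ℝ] ℝ) {x : X}
    (hx : x ∈ K) : |f x| ≤ |supportFn f K| + |supportFn (-f) K| := by
  have h1 := le_supportFn hb f hx
  have h2 := le_supportFn hb (-f) hx
  rw [neg_apply] at h2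
  have h3 := le_abs_self (supportFn f K)
  have h4 := le_abs_self (supportFn (-f) K)
  have h5 := abs_nonneg (supportFn f K)
  have h6 := abs_nonneg (supportFn (-f) K)
  rw [abs_le]
  constructor <;> linarith

lemma exists_apply_eq_supportFn {Y : Submodule ℝ (X →L[ℝ] ℝ)} {K : Set X} (hne : K.Nonempty)
    (hc : IsCompact (evalOn Y '' K)) {f : X →L[ℝ] ℝ} (hf : f ∈ Y) :
    ∃ k ∈ K, f k = supportFn f K := by
  have h1 : IsCompact (f '' K) := by
    have := hc.image (continuous_apply (⟨f, hf⟩ : Y))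
    rwa [image_image] at this
  exact h1.sSup_mem (hne.image f)

/-- A point annihilated by `Y` gives a constant set function which is countably additive
against `Y`, and a constant series converges only if its terms vanish. -/
lemma HasOrliczThomas.eq_of_forall {Y : Submodule ℝ (X →L[ℝ] ℝ)}
    (hOT : HasOrliczThomas (Y : Set (X →L[ℝ] ℝ))) {a b : X} (h : ∀ f ∈ Y, f a = f b) :
    a = b := by
  have h1 : CountablyAdditive (fun _ : Set ℕ => a - b) := by
    refine hOT ℕ ⊤ _ fun f hf => ?_
    intro A _ _
    simp only [map_sub, h f hf, sub_self]
    exact hasSum_zero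
  have h2 := (h1 (fun _ => ∅) (fun _ => MeasurableSet.empty) (fun _ _ _ => by
    simp [Function.onFun])).summable
  exact sub_eq_zero.1 ((summable_const_iff _).1 h2)

end

lemma hasSum_tsum_indicator_iUnion {f : ℕ → ℝ} (hf : Summable f) {S : ℕ → Set ℕ}
    (hS : Pairwise (Function.onFun Disjoint S)) :
    HasSum (fun k => ∑' n, (S k).indicator f n) (∑' n, (⋃ k, S k).indicator f n) := by
  have h1 : HasSum (fun n : (⋃ k, S k : Set ℕ) => f n) (∑' n, (⋃ k, S k).indicator f n) :=
    hasSum_subtype_iff_indicator.2 (hf.indicator _).hasSum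
  refine HasSum.sigma (((unionEqSigmaOfDisjoint hS).symm.hasSum_iff).2 h1) fun k => ?_
  have h2 : HasSum (fun n : S k => f n) (∑' n, (S k).indicator f n) :=
    hasSum_subtype_iff_indicator.2 (hf.indicator _).hasSum
  exact h2

section

variable {Ω X : Type*} [MeasurableSpace Ω] [NormedAddCommGroup X] [NormedSpace ℝ X]
  {M : Set Ω → Set X} {Y : Submodule ℝ (X →L[ℝ] ℝ)} {A : ℕ → Set Ω}

lemma summable_abs_bound (hca : ∀ f ∈ Y, CountablyAdditive (fun A => supportFn f (M A)))
    (hA : ∀ n, MeasurableSet (A n)) (hd : Pairwise (Function.onFun Disjoint A))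
    {f : X →L[ℝ] ℝ} (hf : f ∈ Y) :
    Summable (fun n => |supportFn f (M (A n))| + |supportFn (-f) (M (A n))|) :=
  (hca f hf A hA hd).summable.abs.add (hca (-f) (Y.neg_mem hf) A hA hd).summable.abs

lemma summable_apply_selection (hbd : ∀ A : Set Ω, MeasurableSet A → Bornology.IsBounded (M A))
    (hca : ∀ f ∈ Y, CountablyAdditive (fun A => supportFn f (M A)))
    (hA : ∀ n, MeasurableSet (A n)) (hd : Pairwise (Function.onFun Disjoint A))
    {x : ℕ → X} (hx : ∀ n, x n ∈ M (A n)) {f : X →L[ℝ] ℝ} (hf : f ∈ Y) :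
    Summable (fun n => f (x n)) :=
  (summable_abs_bound hca hA hd hf).of_norm_bounded fun n => abs_apply_le (hbd _ (hA n)) f (hx n)

/-- The support function is countably additive along subfamilies of a disjoint sequence, because
it vanishes at the empty set. -/
lemma hasSum_supportFn_subfamily (hca : ∀ f ∈ Y, CountablyAdditive (fun A => supportFn f (M A)))
    (hA : ∀ n, MeasurableSet (A n)) (hd : Pairwise (Function.onFun Disjoint A))
    {f : X →L[ℝ] ℝ} (hf : f ∈ Y) (S : Set ℕ) :
    HasSum (S.indicator fun n => supportFn f (M (A n))) (supportFn f (M (⋃ n ∈ S, A n))) := by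
  have h0 : supportFn f (M ∅) = 0 :=
    (summable_const_iff _).1 (hca f hf (fun _ : ℕ => ∅) (fun _ => MeasurableSet.empty)
      (fun _ _ _ => by simp [Function.onFun])).summable
  have h1 := hca f hf (fun n => ⋃ _ : n ∈ S, A n)
    (fun n => MeasurableSet.iUnion fun _ => hA n)
    (fun i j hij => (hd hij).mono (iUnion_subset fun _ => le_rfl) (iUnion_subset fun _ => le_rfl))
  convert h1 using 1
  funext n
  by_cases hn : n ∈ S <;> simp [hn, h0]

/-- Every selection of `M (A n)` sums unconditionally to a point of `M (⋃ n, A n)`. -/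
lemma exists_hasSum_selection (hne : ∀ A : Set Ω, MeasurableSet A → (M A).Nonempty)
    (hbd : ∀ A : Set Ω, MeasurableSet A → Bornology.IsBounded (M A))
    (hOT : HasOrliczThomas (Y : Set (X →L[ℝ] ℝ)))
    (hconv : ∀ A : Set Ω, MeasurableSet A → Convex ℝ (M A))
    (hcpt : ∀ A : Set Ω, MeasurableSet A → IsCompact (evalOn Y '' M A))
    (hca : ∀ f ∈ Y, CountablyAdditive (fun A => supportFn f (M A)))
    (hA : ∀ n, MeasurableSet (A n)) (hd : Pairwise (Function.onFun Disjoint A))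
    {x : ℕ → X} (hx : ∀ n, x n ∈ M (A n)) : ∃ s ∈ M (⋃ n, A n), HasSum x s := by
  have hsum : ∀ f ∈ Y, Summable (fun n => f (x n)) := fun f hf =>
    summable_apply_selection hbd hca hA hd hx hf
  have hm : ∀ S : Set ℕ, MeasurableSet (⋃ n ∈ S, A n) := fun S =>
    MeasurableSet.biUnion S.to_countable fun n _ => hA n
  have hex : ∀ S : Set ℕ, ∃ k ∈ M (⋃ n ∈ S, A n),
      ∀ y : Y, ∑' n, S.indicator (fun n => (y : X →L[ℝ] ℝ) (x n)) n = (y : X →L[ℝ] ℝ) k := by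
    intro S
    refine exists_mem_forall_apply_eq (hconv _ (hm S)) (hcpt _ (hm S))
      { toFun := fun y => ∑' n, S.indicator (fun n => (y : X →L[ℝ] ℝ) (x n)) n
        map_add' := fun y z => ?_
        map_smul' := fun c y => ?_ } fun y => ?_
    · rw [← ((hsum y y.2).indicator S).tsum_add ((hsum z z.2).indicator S)]
      refine tsum_congr fun n => ?_
      by_cases hn : n ∈ S <;> simp [hn]
    · rw [RingHom.id_apply, smul_eq_mul, ← tsum_mul_left]
      refine tsum_congr fun n => ?_
      by_cases hn : n ∈ S <;> simp [hn]
    · obtain ⟨k, hk, hkeq⟩ := exists_apply_eq_supportFn (hne _ (hm S)) (hcpt _ (hm S)) y.2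
      refine ⟨k, hk, hkeq ▸ ?_⟩
      exact hasSum_le (fun n => indicator_le_indicator (le_supportFn (hbd _ (hA n)) _ (hx n)))
        ((hsum y y.2).indicator S).hasSum (hasSum_supportFn_subfamily hca hA hd y.2 S)
  choose ν hνM hν using hex
  have hνca : CountablyAdditive ν := by
    refine hOT ℕ _ ν fun f hf S _ hS => ?_
    have := hasSum_tsum_indicator_iUnion (hsum f hf) hS
    simpa only [hν _ ⟨f, hf⟩] using this
  have hνs : ∀ n, ν {n} = x n := fun n => hOT.eq_of_forall fun f hf => by
    rw [← hν {n} ⟨f, hf⟩, tsum_eq_single n (fun m hm => by simp [hm])]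
    simp
  have h1 := hνca (fun n => {n}) (fun n => measurableSet_singleton n)
    (fun i j hij => by simpa [Function.onFun] using hij)
  simp only [hνs, iUnion_of_singleton] at h1
  refine ⟨_, ?_, h1⟩
  simpa using hνM univ

/-- The sum of the series of sets `∑ₙ M (A n)` is `σ(X, Y)`-compact: it is a continuous image of
the compact product `∏ₙ M (A n)`, by the Weierstrass M-test. -/
lemma isCompact_evalOn_seriesSumSet
    (hbd : ∀ A : Set Ω, MeasurableSet A → Bornology.IsBounded (M A))
    (hcpt : ∀ A : Set Ω, MeasurableSet A → IsCompact (evalOn Y '' M A))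
    (hca : ∀ f ∈ Y, CountablyAdditive (fun A => supportFn f (M A)))
    (hA : ∀ n, MeasurableSet (A n)) (hd : Pairwise (Function.onFun Disjoint A))
    (hs : UncondConvSeriesOfSets fun n => M (A n)) :
    IsCompact (evalOn Y '' seriesSumSet fun n => M (A n)) := by
  have hK : IsCompact (univ.pi fun n => evalOn Y '' M (A n)) :=
    isCompact_univ_pi fun n => hcpt _ (hA n)
  have hT : ContinuousOn (fun (g : ℕ → Y → ℝ) (y : Y) => ∑' n, g n y)
      (univ.pi fun n => evalOn Y '' M (A n)) := by
    refine continuousOn_pi.2 fun y => continuousOn_tsum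
      (fun n => ((continuous_apply y).comp (continuous_apply n)).continuousOn)
      (summable_abs_bound hca hA hd y.2) fun n g hg => ?_
    obtain ⟨x, hx, hxg⟩ := hg n (mem_univ n)
    rw [← hxg]
    exact abs_apply_le (hbd _ (hA n)) _ hx
  convert hK.image_of_continuousOn hT using 1
  ext g
  constructor
  · rintro ⟨s, ⟨x, hx, hxs⟩, rfl⟩
    refine ⟨fun n => evalOn Y (x n), fun n _ => mem_image_of_mem _ (hx n), ?_⟩
    funext y
    exact (hxs.mapL (y : X →L[ℝ] ℝ)).tsum_eq
  · rintro ⟨g, hg, rfl⟩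
    choose x hx hxg using fun n => hg n (mem_univ n)
    refine ⟨∑' n, x n, ⟨x, hx, (hs x hx).hasSum⟩, ?_⟩
    funext y
    simp only [← hxg]
    exact ((hs x hx).hasSum.mapL (y : X →L[ℝ] ℝ)).tsum_eq.symm

lemma convex_seriesSumSet {C : ℕ → Set X} (hC : ∀ n, Convex ℝ (C n)) :
    Convex ℝ (seriesSumSet C) := by
  rintro s ⟨x, hx, hxs⟩ t ⟨z, hz, hzt⟩ a b ha hb hab
  exact ⟨fun n => a • x n + b • z n, fun n => hC n (hx n) (hz n) ha hb hab,
    (hxs.const_smul a).add (hzt.const_smul b)⟩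

end

/-- **Main theorem.** Let `X` be a Banach space and `M : Σ → b(X)` a
set-valued map. If there is a linear subspace `Y ⊆ X*` with the Orlicz–Thomas property
such that every `M(A)` is convex and `σ(X,Y)`-compact and `s(x*, M)` is countably
additive for every `x* ∈ Y`, then `M` is a strong multimeasure. -/
theorem statement5 {Ω X : Type*} [MeasurableSpace Ω]
    [NormedAddCommGroup X] [NormedSpace ℝ X] [CompleteSpace X]
    (M : Set Ω → Set X)
    (hne : ∀ A : Set Ω, MeasurableSet A → (M A).Nonempty)
    (hbd : ∀ A : Set Ω, MeasurableSet A → Bornology.IsBounded (M A))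
    (Y : Submodule ℝ (X →L[ℝ] ℝ))
    (hOT : HasOrliczThomas (Y : Set (X →L[ℝ] ℝ)))
    (hconv : ∀ A : Set Ω, MeasurableSet A → Convex ℝ (M A))
    (hcpt : ∀ A : Set Ω, MeasurableSet A → @IsCompact X (sigmaTop (Y : Set (X →L[ℝ] ℝ))) (M A))
    (hca : ∀ f ∈ Y, CountablyAdditive (fun A => supportFn f (M A))) :
    IsStrongMultimeasure M := by
  intro A hA hd
  have hcpt' : ∀ A : Set Ω, MeasurableSet A → IsCompact (evalOn Y '' M A) := fun A hA =>
    isCompact_image_evalOn (hcpt A hA)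
  have hsel : ∀ x : ℕ → X, (∀ n, x n ∈ M (A n)) → ∃ s ∈ M (⋃ n, A n), HasSum x s := fun x hx =>
    exists_hasSum_selection hne hbd hOT hconv hcpt' hca hA hd hx
  have hs : UncondConvSeriesOfSets fun n => M (A n) := fun x hx =>
    let ⟨_, _, h⟩ := hsel x hx
    h.summable
  refine ⟨hs, congrArg closure (Subset.antisymm ?_ ?_)⟩
  · intro a ha
    -- the linear functional on `Y` to be represented is the evaluation at `a`
    obtain ⟨k, hk, hka⟩ := exists_mem_forall_apply_eq
      (convex_seriesSumSet fun n => hconv _ (hA n))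
      (isCompact_evalOn_seriesSumSet hbd hcpt' hca hA hd hs)
      { toFun := fun y : Y => (y : X →L[ℝ] ℝ) a
        map_add' := fun _ _ => rfl
        map_smul' := fun _ _ => rfl } fun y => by
        choose x hx hxeq using fun n =>
          exists_apply_eq_supportFn (hne _ (hA n)) (hcpt' _ (hA n)) y.2
        have hsum := (hs x hx).hasSum
        refine ⟨_, ⟨x, hx, hsum⟩, ?_⟩
        have h1 := hsum.mapL (y : X →L[ℝ] ℝ)
        simp only [hxeq] at h1
        rw [h1.unique (hca y y.2 A hA hd)]
        exact le_supportFn (hbd _ (MeasurableSet.iUnion hA)) _ ha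
    rwa [hOT.eq_of_forall (a := a) (b := k) fun f hf => hka ⟨f, hf⟩]
  · rintro s ⟨x, hx, hxs⟩
    obtain ⟨t, ht, hxt⟩ := hsel x hx
    rwa [hxs.unique hxt]
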